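/- arXiv:2309.16096 — 12 statements merged into one kernel-verified Lean document; each statement's English description precedes it below -/
import Mathlib

section
/- Let n ≥ 1 and K ≥ 1 be natural numbers, let E := EuclideanSpace ℝ (Fin n), let 0 < ε ≤ 1 and δ ≥ 0. Let π : Fin K → ℝ satisfy π k ≥ 0 for all k and ∑ k, π k = 1, and for each k let q k be a Borel probability measure on E with q k {x | ‖x‖ ≤ 1 − ε} = 1. Let f : E → Fin K be Borel measurable and assume the robust risk satisfies R(f, ε) ≤ δ. Then there exist a class k : Fin K and a set S ⊆ {x | ‖x‖ ≤ 1} such that q k S ≥ 1 − δ and volume S ≤ volume {x | ‖x‖ ≤ 1 ∧ f x = k} * Real.exp (−(n : ℝ) * ε). -/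
open MeasureTheory

/-- The robust risk of a classifier `f` against `ℓ2` perturbations of size `ε`,
for class priors `π` and class conditionals `q`, with data constrained to the
unit ball of `E`. -/
noncomputable def robustRisk {n K : ℕ}
    (π : Fin K → ℝ) (q : Fin K → Measure (EuclideanSpace ℝ (Fin n)))
    (f : EuclideanSpace ℝ (Fin n) → Fin K) (ε : ℝ) : ℝ :=
  ∑ k, π k * (q k {x | ∃ x', ‖x' - x‖ ≤ ε ∧ ‖x'‖ ≤ 1 ∧ f x' ≠ k}).toReal

open scoped Pointwise

theorem exists_concentrated_class
    (n K : ℕ) (hn : 1 ≤ n) (hK : 1 ≤ K)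
    (ε δ : ℝ) (hε : 0 < ε) (hε1 : ε ≤ 1) (hδ : 0 ≤ δ)
    (π : Fin K → ℝ) (hπ : ∀ k, 0 ≤ π k) (hπ1 : ∑ k, π k = 1)
    (q : Fin K → Measure (EuclideanSpace ℝ (Fin n)))
    (hq : ∀ k, IsProbabilityMeasure (q k))
    (hsupp : ∀ k, q k {x | ‖x‖ ≤ 1 - ε} = 1)
    (f : EuclideanSpace ℝ (Fin n) → Fin K) (hf : Measurable f)
    (hrisk : robustRisk π q f ε ≤ δ) :
    ∃ (k : Fin K) (S : Set (EuclideanSpace ℝ (Fin n))),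
      S ⊆ {x | ‖x‖ ≤ 1} ∧
      1 - δ ≤ (q k S).toReal ∧
      volume S ≤ volume {x | ‖x‖ ≤ 1 ∧ f x = k} * ENNReal.ofReal (Real.exp (-(n : ℝ) * ε)) := by
  classical
  set bad : Fin K → Set (EuclideanSpace ℝ (Fin n)) :=
    fun k => {x | ∃ x', ‖x' - x‖ ≤ ε ∧ ‖x'‖ ≤ 1 ∧ f x' ≠ k} with hbad
  have hrisk' : ∑ k, π k * (q k (bad k)).toReal ≤ δ := hrisk
  obtain ⟨k, hk⟩ : ∃ k, (q k (bad k)).toReal ≤ δ := by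
    by_contra! hcon
    obtain ⟨j, hj⟩ : ∃ j, 0 < π j := by
      by_contra! h
      have : ∑ k, π k ≤ 0 := Finset.sum_nonpos fun i _ => h i
      linarith
    have hlt : ∑ k, π k * δ < ∑ k, π k * (q k (bad k)).toReal :=
      Finset.sum_lt_sum (fun i _ => mul_le_mul_of_nonneg_left (hcon i).le (hπ i))
        ⟨j, Finset.mem_univ _, mul_lt_mul_of_pos_left (hcon j) hj⟩
    rw [← Finset.sum_mul, hπ1, one_mul] at hlt
    linarith
  have := hq k
  set S : Set (EuclideanSpace ℝ (Fin n)) := {x | ‖x‖ ≤ 1 - ε} \ bad k with hS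
  refine ⟨k, S, fun x hx => ?_, ?_, ?_⟩
  · have h1 : ‖x‖ ≤ 1 - ε := hx.1
    show ‖x‖ ≤ 1
    linarith
  · have h1 : (q k) {x | ‖x‖ ≤ 1 - ε} ≤ q k S + q k (bad k) := by
      refine (measure_mono ?_).trans (measure_union_le _ _)
      intro x hx
      by_cases hb : x ∈ bad k
      · exact Or.inr hb
      · exact Or.inl ⟨hx, hb⟩
    rw [hsupp k] at h1
    have h2 := ENNReal.toReal_mono (by simp) h1
    rw [ENNReal.toReal_add (by simp) (by simp), ENNReal.toReal_one] at h2
    linarith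
  · have hsub : S ⊆ (1 - ε) • {x | ‖x‖ ≤ 1 ∧ f x = k} := by
      rintro x ⟨hx, hxb⟩
      have hx : ‖x‖ ≤ 1 - ε := hx
      have key : ∀ x', ‖x' - x‖ ≤ ε → ‖x'‖ ≤ 1 → f x' = k := by
        intro x' h1 h2
        by_contra h3
        exact hxb ⟨x', h1, h2, h3⟩
      rcases hε1.eq_or_lt with h | h
      · subst h
        have hx0 : x = 0 := by
          rw [← norm_le_zero_iff]; linarith
        subst hx0
        exact ⟨0, ⟨by simp, key 0 (by simp) (by simp)⟩, by simp⟩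
      · have hp : 0 < 1 - ε := by linarith
        have hn1 : ‖(1 - ε)⁻¹ • x‖ ≤ 1 := by
          rw [norm_smul, Real.norm_of_nonneg (inv_nonneg.2 hp.le), inv_mul_le_iff₀ hp]
          linarith
        have hxe : (1 - ε) • (1 - ε)⁻¹ • x = x := smul_inv_smul₀ hp.ne' x
        refine ⟨(1 - ε)⁻¹ • x, ⟨hn1, key _ ?_ hn1⟩, hxe⟩
        have : (1 - ε)⁻¹ • x - x = ε • (1 - ε)⁻¹ • x := by
          conv_lhs => rw [← hxe, smul_inv_smul₀ hp.ne']
          nth_rewrite 2 [← hxe]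
          rw [sub_smul, one_smul]
          abel
        rw [this, norm_smul, Real.norm_of_nonneg hε.le]
        nlinarith
    refine (measure_mono hsub).trans ?_
    rw [Measure.addHaar_smul, mul_comm, finrank_euclideanSpace_fin]
    gcongr
    have h0 : 0 ≤ 1 - ε := by linarith
    rw [abs_of_nonneg (pow_nonneg h0 n)]
    have : Real.exp (-(n : ℝ) * ε) = Real.exp (-ε) ^ n := by
      rw [← Real.exp_nat_mul]; ring_nf
    rw [this]
    exact pow_le_pow_left₀ h0 (Real.one_sub_le_exp_neg ε) n
end

section
/- Let n ≥ 1 and K ≥ 1 be natural numbers, let E := EuclideanSpace ℝ (Fin n), let 0 < ε ≤ 1 and δ ≥ 0. Suppose the classes are balanced, i.e. π k = 1/K for all k, and for each k let q k be a Borel probability measure on E with q k {x | ‖x‖ ≤ 1 − ε} = 1. Let f : E → Fin K be Borel measurable with robust risk R(f, ε) ≤ δ. Then for every class k : Fin K there exists a set S_k ⊆ {x | ‖x‖ ≤ 1} such that q k S_k ≥ 1 − K * δ and volume S_k ≤ C_max * Real.exp (−(n : ℝ) * ε), where C_max := the maximum over j : Fin K of volume {x | ‖x‖ ≤ 1 ∧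 f x = j}. -/
open MeasureTheory

theorem all_classes_concentrated_of_balanced
    (n K : ℕ) (hn : 1 ≤ n) (hK : 1 ≤ K)
    (ε δ : ℝ) (hε : 0 < ε) (hε1 : ε ≤ 1) (hδ : 0 ≤ δ)
    (π : Fin K → ℝ) (hπ : ∀ k, π k = 1 / K)
    (q : Fin K → Measure (EuclideanSpace ℝ (Fin n)))
    (hq : ∀ k, IsProbabilityMeasure (q k))
    (hsupp : ∀ k, q k {x | ‖x‖ ≤ 1 - ε} = 1)
    (f : EuclideanSpace ℝ (Fin n) → Fin K) (hf : Measurable f)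
    (hrisk : robustRisk π q f ε ≤ δ) :
    ∀ k : Fin K, ∃ S : Set (EuclideanSpace ℝ (Fin n)),
      S ⊆ {x | ‖x‖ ≤ 1} ∧
      1 - K * δ ≤ (q k S).toReal ∧
      volume S ≤ (⨆ j : Fin K, volume {x | ‖x‖ ≤ 1 ∧ f x = j}) *
        ENNReal.ofReal (Real.exp (-(n : ℝ) * ε)) := by
  intro k
  have hr : 0 ≤ 1 - ε := by linarith
  set B : Set (EuclideanSpace ℝ (Fin n)) :=
    {x | ∃ x', ‖x' - x‖ ≤ ε ∧ ‖x'‖ ≤ 1 ∧ f x' ≠ k} with hB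
  set C : Set (EuclideanSpace ℝ (Fin n)) := {x | ‖x‖ ≤ 1 ∧ f x = k} with hC
  have hKpos : (0 : ℝ) < K := by exact_mod_cast hK
  have hBle : (q k B).toReal ≤ K * δ := by
    have h1 : π k * (q k B).toReal ≤ robustRisk π q f ε := by
      unfold robustRisk
      refine Finset.single_le_sum
        (f := fun k => π k * (q k {x | ∃ x', ‖x' - x‖ ≤ ε ∧ ‖x'‖ ≤ 1 ∧ f x' ≠ k}).toReal)
        (fun j _ => ?_) (Finset.mem_univ k)
      rw [hπ j]
      positivity
    have h2 : 1 / (K : ℝ) * (q k B).toReal ≤ δ := by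
      rw [← hπ k]
      exact h1.trans hrisk
    rw [one_div, inv_mul_le_iff₀ hKpos] at h2
    exact h2
  refine ⟨{x | ‖x‖ ≤ 1 - ε} \ B, ?_, ?_, ?_⟩
  · rintro x ⟨hx, -⟩
    simp only [Set.mem_ofPred_eq] at hx ⊢
    linarith
  · have h3 : (1 : ENNReal) ≤ q k ({x | ‖x‖ ≤ 1 - ε} \ B) + q k B := by
      rw [← hsupp k]
      refine (measure_mono ?_).trans (measure_union_le _ _)
      intro x hx
      by_cases hxB : x ∈ B
      · exact Or.inr hxB
      · exact Or.inl ⟨hx, hxB⟩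
    have h4 := ENNReal.toReal_mono (by finiteness) h3
    rw [ENNReal.toReal_add (by finiteness) (by finiteness), ENNReal.toReal_one] at h4
    linarith
  · -- each point of the set is `(1 - ε)` times a point of `C`
    have hsub : {x | ‖x‖ ≤ 1 - ε} \ B ⊆ (fun x => (1 - ε) • x) '' C := by
      rintro x ⟨hx, hxB⟩
      simp only [Set.mem_ofPred_eq] at hx
      simp only [hB, Set.mem_ofPred_eq, not_exists, not_and, not_not] at hxB
      rcases hr.eq_or_lt with h0 | hpos
      · have hx0 : x = 0 := by
          rw [← norm_le_zero_iff, h0]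
          exact hx
        subst hx0
        exact ⟨0, ⟨by simp, hxB 0 (by simpa using hε.le) (by simp)⟩, by simp⟩
      · have hn1 : ‖(1 - ε)⁻¹ • x‖ ≤ 1 := by
          rw [norm_smul, Real.norm_of_nonneg (by positivity), inv_mul_le_iff₀ hpos]
          linarith
        refine ⟨(1 - ε)⁻¹ • x, ⟨hn1, hxB _ ?_ hn1⟩, smul_inv_smul₀ hpos.ne' x⟩
        have : (1 - ε)⁻¹ • x - x = ε • ((1 - ε)⁻¹ • x) := by
          have hx' : x = (1 - ε) • ((1 - ε)⁻¹ • x) := (smul_inv_smul₀ hpos.ne' x).symm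
          nth_rewrite 2 [hx']
          rw [sub_smul, one_smul]
          abel
        rw [this, norm_smul, Real.norm_of_nonneg hε.le]
        nlinarith
    have hvol : volume ((fun x => (1 - ε) • x) '' C)
        = ENNReal.ofReal ((1 - ε) ^ n) * volume C := by
      have := Measure.addHaar_smul
        (volume : Measure (EuclideanSpace ℝ (Fin n))) (1 - ε) C
      rw [finrank_euclideanSpace_fin, abs_of_nonneg (pow_nonneg hr n)] at this
      exact this
    have hexp : (1 - ε) ^ n ≤ Real.exp (-(n : ℝ) * ε) := by
      have : Real.exp (-(n : ℝ) * ε) = Real.exp (-ε) ^ n := by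
        rw [← Real.exp_nat_mul]
        ring_nf
      rw [this]
      exact pow_le_pow_left₀ hr (Real.one_sub_le_exp_neg ε) n
    calc volume ({x | ‖x‖ ≤ 1 - ε} \ B)
        ≤ ENNReal.ofReal ((1 - ε) ^ n) * volume C := (measure_mono hsub).trans hvol.le
      _ = volume C * ENNReal.ofReal ((1 - ε) ^ n) := mul_comm _ _
      _ ≤ _ := mul_le_mul'
          (le_iSup (fun j : Fin K => volume {x : EuclideanSpace ℝ (Fin n) | ‖x‖ ≤ 1 ∧ f x = j}) k)
          (ENNReal.ofReal_le_ofReal hexp)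
end

section
/- Let n ≥ 1 and K ≥ 1 be natural numbers, let E := EuclideanSpace ℝ (Fin n), let 0 ≤ ε ≤ 1 and δ, γ ≥ 0. Let π : Fin K → ℝ satisfy π k ≥ 0 for all k and ∑ k, π k = 1. For each k let q k be a Borel probability measure on E with q k {x | ‖x‖ ≤ 1 − ε} = 1, and suppose there are sets S_k ⊆ E such that q k (S_k) ≥ 1 − δ and q k (⋃_{k' ≠ k} (S_{k'})^{+2ε}) ≤ γ for every k, where expansions are taken with respect to the Euclidean metric. Then there exists a classifier f : E → Fin K whose robust risk satisfies R(f, ε) ≤ δ + γ. -/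
open MeasureTheory

/-- The ε-expansion of a set in a metric space. -/
def expandSet {X : Type*} [MetricSpace X] (S : Set X) (ε : ℝ) : Set X :=
  {x | ∃ y ∈ S, dist x y ≤ ε}

open scoped Pointwise in
/-- Points whose closed `r`-ball lies in an open set form an open set. -/
theorem isOpen_shrink_aux {n : ℕ} (V : Set (EuclideanSpace ℝ (Fin n))) (hV : IsOpen V) (r : ℝ) :
    IsOpen {x : EuclideanSpace ℝ (Fin n) | ∀ y, dist y x ≤ r → y ∈ V} := by
  have h1 : IsClosed (Vᶜ + Metric.closedBall (0 : EuclideanSpace ℝ (Fin n)) r) :=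
    hV.isClosed_compl.add_right_of_isCompact (isCompact_closedBall _ _)
  have h2 : {x : EuclideanSpace ℝ (Fin n) | ∀ y, dist y x ≤ r → y ∈ V}
      = (Vᶜ + Metric.closedBall (0 : EuclideanSpace ℝ (Fin n)) r)ᶜ := by
    ext x
    simp only [Set.mem_setOf_eq, Set.mem_compl_iff, Set.mem_add]
    constructor
    · rintro h ⟨y, hy, z, hz, rfl⟩
      refine hy (h y ?_)
      rw [mem_closedBall_zero_iff] at hz
      simpa [dist_eq_norm] using hz
    · intro h y hy
      by_contra hyV
      refine h ⟨y, hyV, x - y, ?_, by abel⟩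
      rw [mem_closedBall_zero_iff, ← dist_eq_norm, dist_comm]
      exact hy
  rw [h2]
  exact h1.isOpen_compl

/-- A measurable hull which remains measurable after contraction. -/
theorem exists_hull_aux {n : ℕ} (μ : Measure (EuclideanSpace ℝ (Fin n)))
    [IsProbabilityMeasure μ] (U : Set (EuclideanSpace ℝ (Fin n))) (r : ℝ) :
    ∃ T, U ⊆ T ∧ μ T ≤ μ U ∧ MeasurableSet {x | ∀ y, dist y x ≤ r → y ∈ T} := by
  have h : ∀ m : ℕ, ∃ V, V ⊇ U ∧ IsOpen V ∧ μ V ≤ μ U + ((m : ENNReal) + 1)⁻¹ := fun m =>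
    U.exists_isOpen_le_add μ (by simp)
  choose V hUV hVo hV using h
  refine ⟨⋂ m, V m, Set.subset_iInter hUV, ?_, ?_⟩
  · have ht : Filter.Tendsto (fun m : ℕ => μ U + ((m : ENNReal) + 1)⁻¹) Filter.atTop
        (nhds (μ U + 0)) := by
      refine Filter.Tendsto.add tendsto_const_nhds ?_
      have := (Filter.tendsto_add_atTop_iff_nat 1).2 ENNReal.tendsto_inv_nat_nhds_zero
      simpa using this
    rw [add_zero] at ht
    exact ge_of_tendsto' ht fun m => (measure_mono (Set.iInter_subset V m)).trans (hV m)
  · have : {x | ∀ y, dist y x ≤ r → y ∈ ⋂ m, V m}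
        = ⋂ m, {x | ∀ y, dist y x ≤ r → y ∈ V m} := by
      ext x
      simp only [Set.mem_iInter, Set.mem_setOf_eq]
      exact ⟨fun h m y hy => h y hy m, fun h y hy m => h m y hy⟩
    rw [this]
    exact MeasurableSet.iInter fun m => (isOpen_shrink_aux _ (hVo m) r).measurableSet

theorem exists_robust_classifier_of_strong_concentration
    (n K : ℕ) (hn : 1 ≤ n) (hK : 1 ≤ K)
    (ε δ γ : ℝ) (hε : 0 ≤ ε) (hε1 : ε ≤ 1) (hδ : 0 ≤ δ) (hγ : 0 ≤ γ)
    (π : Fin K → ℝ) (hπ : ∀ k, 0 ≤ π k) (hπ1 : ∑ k, π k = 1)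
    (q : Fin K → Measure (EuclideanSpace ℝ (Fin n)))
    (hq : ∀ k, IsProbabilityMeasure (q k))
    (hsupp : ∀ k, q k {x | ‖x‖ ≤ 1 - ε} = 1)
    (S : Fin K → Set (EuclideanSpace ℝ (Fin n)))
    (hconc : ∀ k, 1 - δ ≤ (q k (S k)).toReal)
    (hsep : ∀ k, (q k (⋃ k' ∈ {k' : Fin K | k' ≠ k}, expandSet (S k') (2 * ε))).toReal ≤ γ) :
    ∃ f : EuclideanSpace ℝ (Fin n) → Fin K, robustRisk π q f ε ≤ δ + γ := by
  classical
  choose T hUT hT hTm using fun k => exists_hull_aux (q k)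
    (⋃ k' ∈ {k' : Fin K | k' ≠ k}, expandSet (S k') (2 * ε)) (2 * ε)
  let M : Fin K → Set (EuclideanSpace ℝ (Fin n)) := fun k =>
    ⋂ j : Fin K, ⋂ _ : j ≠ k, {x | ∀ y, dist y x ≤ 2 * ε → y ∈ T j}
  have hMm : ∀ k, MeasurableSet (M k) := fun k =>
    MeasurableSet.iInter fun j => MeasurableSet.iInter fun _ => hTm j
  have hSM : ∀ k, S k ⊆ M k := by
    intro k x hx
    simp only [M, Set.mem_iInter, Set.mem_setOf_eq]
    intro j hj y hy
    apply hUT j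
    simp only [Set.mem_iUnion]
    exact ⟨k, hj.symm, x, hx, hy⟩
  have key : ∀ j k, j ≠ k → ∀ x ∈ M k, ∀ y, y ∉ T j → ¬ dist y x ≤ 2 * ε := by
    intro j k hjk x hx y hy hd
    simp only [M, Set.mem_iInter, Set.mem_setOf_eq] at hx
    exact hy (hx j hjk y hd)
  let P : EuclideanSpace ℝ (Fin n) → Fin K → Prop := fun x' k =>
    ∃ x, x ∈ M k ∧ x ∉ T k ∧ dist x' x ≤ ε
  have huniq : ∀ x' j k, P x' j → P x' k → j = k := by
    rintro x' j k ⟨y, _, hyT, hyd⟩ ⟨x, hxM, _, hxd⟩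
    by_contra hjk
    refine key j k hjk x hxM y hyT ?_
    have := dist_triangle_left y x x'
    linarith
  let f : EuclideanSpace ℝ (Fin n) → Fin K := fun x' =>
    if h : ∃ k, P x' k then h.choose else ⟨0, hK⟩
  have hf : ∀ x' k, P x' k → f x' = k := by
    intro x' k h
    have h' : ∃ k, P x' k := ⟨k, h⟩
    have : f x' = h'.choose := dif_pos h'
    rw [this]
    exact huniq x' _ _ h'.choose_spec h
  refine ⟨f, ?_⟩
  have hb : ∀ k, (q k {x | ∃ x', ‖x' - x‖ ≤ ε ∧ ‖x'‖ ≤ 1 ∧ f x' ≠ k}).toReal ≤ δ + γ := by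
    intro k
    have := hq k
    have hsub : {x | ∃ x', ‖x' - x‖ ≤ ε ∧ ‖x'‖ ≤ 1 ∧ f x' ≠ k} ⊆ (M k)ᶜ ∪ T k := by
      rintro x ⟨x', hd, _, hne⟩
      by_contra hx
      simp only [Set.mem_union, Set.mem_compl_iff, not_or, not_not] at hx
      exact hne (hf x' k ⟨x, hx.1, hx.2, by rwa [dist_eq_norm]⟩)
    have h1 : (q k).real {x | ∃ x', ‖x' - x‖ ≤ ε ∧ ‖x'‖ ≤ 1 ∧ f x' ≠ k}
        ≤ (q k).real (M k)ᶜ + (q k).real (T k) :=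
      (measureReal_mono hsub).trans (measureReal_union_le _ _)
    have h2 : (q k).real (M k)ᶜ = 1 - (q k).real (M k) := probReal_compl_eq_one_sub (hMm k)
    have h3 : (q k).real (S k) ≤ (q k).real (M k) := measureReal_mono (hSM k)
    have h4 : (q k).real (T k) ≤ γ :=
      (ENNReal.toReal_mono (measure_ne_top _ _) (hT k)).trans (hsep k)
    have h5 : 1 - δ ≤ (q k).real (S k) := hconc k
    change (q k).real _ ≤ _
    linarith
  calc robustRisk π q f ε ≤ ∑ k, π k * (δ + γ) :=
        Finset.sum_le_sum fun k _ => mul_le_mul_of_nonneg_left (hb k) (hπ k)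
    _ = δ + γ := by rw [← Finset.sum_mul, hπ1, one_mul]
end

section
/- Let X be a metric space, let S, T, W ⊆ X and ε ≥ 0. Then (S \ T^{+2ε}) ∩ W^{−ε} ⊆ ((S^{+ε} \ T^{+ε}) ∩ W)^{−ε}. -/
/-- The ε-contraction of a set in a metric space. -/
def contractSet {X : Type*} [MetricSpace X] (S : Set X) (ε : ℝ) : Set X :=
  {x | x ∈ S ∧ ∀ y, dist y x ≤ ε → y ∈ S}

theorem contract_subset_key {X : Type*} [MetricSpace X] (S T W : Set X) (ε : ℝ) (hε : 0 ≤ ε) :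
    (S \ expandSet T (2 * ε)) ∩ contractSet W ε ⊆
      contractSet ((expandSet S ε \ expandSet T ε) ∩ W) ε := by
  rintro x ⟨⟨hS, hT⟩, hW, hW'⟩
  have key : ∀ y, dist y x ≤ ε → y ∈ (expandSet S ε \ expandSet T ε) ∩ W := by
    intro y hy
    refine ⟨⟨⟨x, hS, hy⟩, ?_⟩, hW' y hy⟩
    rintro ⟨t, ht, hyt⟩
    refine hT ⟨t, ht, ?_⟩
    have h1 := dist_triangle x y t
    rw [dist_comm x y] at h1
    linarith
  exact ⟨key x (by rw [dist_self]; exact hε), key⟩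
end

section
/- Let n ≥ 1, let E := EuclideanSpace ℝ (Fin n), let A be a compact subset of the closed unit ball {x | ‖x‖ ≤ 1} of E, and let 0 < ε ≤ 1. Then volume (A^{−ε}) ≤ (1 − ε)^n * volume A, and consequently volume (A^{−ε}) ≤ Real.exp (−(n : ℝ) * ε) * volume A, where the ε-contraction is taken with respect to the Euclidean metric and 'volume' is the Lebesgue measure on E. -/
open MeasureTheory

open scoped Pointwise in
theorem contractSet_subset_smul
    (n : ℕ) (A : Set (EuclideanSpace ℝ (Fin n)))
    (hAsub : A ⊆ {x | ‖x‖ ≤ 1})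
    (ε : ℝ) (hε : 0 < ε) (hε1 : ε ≤ 1) :
    contractSet A ε ⊆ (1 - ε) • A := by
  rintro x ⟨hxA, hx⟩
  have hnorm : ‖x‖ ≤ 1 - ε := by
    by_cases h0 : x = 0
    · simp [h0, hε1]
    have hp : 0 < ‖x‖ := norm_pos_iff.mpr h0
    have h1 : (1 + ε / ‖x‖) • x ∈ A := by
      apply hx
      rw [dist_eq_norm, show (1 + ε / ‖x‖) • x - x = (ε / ‖x‖) • x by module, norm_smul,
        Real.norm_of_nonneg (by positivity), div_mul_cancel₀ _ hp.ne']
    have h2 : ‖(1 + ε / ‖x‖) • x‖ ≤ 1 := hAsub h1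
    rw [norm_smul, Real.norm_of_nonneg (by positivity), add_mul, div_mul_cancel₀ _ hp.ne'] at h2
    linarith
  rcases hε1.eq_or_lt with h | h
  · have h0 : x = 0 := by
      rw [h, sub_self] at hnorm
      exact norm_le_zero_iff.mp hnorm
    exact Set.mem_smul_set.mpr ⟨x, hxA, by simp [h0]⟩
  · have hr : 0 < 1 - ε := by linarith
    refine Set.mem_smul_set.mpr ⟨(1 - ε)⁻¹ • x, ?_, smul_inv_smul₀ hr.ne' x⟩
    apply hx
    have h3 : (1 - ε)⁻¹ • x - x = (ε / (1 - ε)) • x := by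
      have : ε / (1 - ε) = (1 - ε)⁻¹ - 1 := by field_simp; ring
      rw [this]; module
    rw [dist_eq_norm, h3, norm_smul, Real.norm_of_nonneg (by positivity)]
    calc ε / (1 - ε) * ‖x‖ ≤ ε / (1 - ε) * (1 - ε) := by gcongr
      _ = ε := div_mul_cancel₀ _ hr.ne'

theorem volume_contract_le
    (n : ℕ) (hn : 1 ≤ n) (A : Set (EuclideanSpace ℝ (Fin n)))
    (hA : IsCompact A) (hAsub : A ⊆ {x | ‖x‖ ≤ 1})
    (ε : ℝ) (hε : 0 < ε) (hε1 : ε ≤ 1) :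
    volume (contractSet A ε) ≤ ENNReal.ofReal ((1 - ε) ^ n) * volume A ∧
    volume (contractSet A ε) ≤ ENNReal.ofReal (Real.exp (-(n : ℝ) * ε)) * volume A := by
  have hr : 0 ≤ 1 - ε := by linarith
  have h1 : volume (contractSet A ε) ≤ ENNReal.ofReal ((1 - ε) ^ n) * volume A := by
    refine (measure_mono (contractSet_subset_smul n A hAsub ε hε hε1)).trans ?_
    rw [Measure.addHaar_smul, finrank_euclideanSpace_fin, abs_of_nonneg (pow_nonneg hr n)]
  refine ⟨h1, h1.trans ?_⟩
  have h2 : (1 - ε) ^ n ≤ Real.exp (-(n : ℝ) * ε) := by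
    rw [show -(n : ℝ) * ε = n * (-ε) by ring, Real.exp_nat_mul]
    exact pow_le_pow_left₀ hr (Real.one_sub_le_exp_neg ε) n
  gcongr
end

section
/- With the dual-projection setup: for every x' ∈ E with λ • x' ∈ C(x) = F + V, the active set is stable, i.e. Active(λ • x') = Active(λ • x); moreover, if λ • x' = f + v with f ∈ F and v ∈ V, then the projection satisfies P(λ • x') = f. -/
open scoped RealInnerProductSpace Pointwise

theorem active_set_stable
    {n : ℕ} {ι : Type*} [Fintype ι] (t : ι → EuclideanSpace ℝ (Fin n))
    -- `P` is the metric projection onto the polar polyhedron `K° = {d | ∀ i, ⟪t i, d⟫ ≤ 1}`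
    (P : EuclideanSpace ℝ (Fin n) → EuclideanSpace ℝ (Fin n))
    (hPmem : ∀ y, P y ∈ {d : EuclideanSpace ℝ (Fin n) | ∀ i, ⟪t i, d⟫ ≤ 1})
    (hPnear : ∀ y, ∀ z ∈ {d : EuclideanSpace ℝ (Fin n) | ∀ i, ⟪t i, d⟫ ≤ 1},
      ‖y - P y‖ ≤ ‖y - z‖)
    (x : EuclideanSpace ℝ (Fin n)) (lam : ℝ) (hlam : 0 < lam)
    -- the active set `A := Active (lam • x)`
    (A : Set ι) (hA : A = {i | ⟪t i, P (lam • x)⟫ = 1})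
    -- the face `F`, the cone `V`, and the certified polyhedron `C = F + V`
    (F V C : Set (EuclideanSpace ℝ (Fin n)))
    (hF : F = {d | (∀ i ∈ A, ⟪t i, d⟫ = 1) ∧ (∀ i ∉ A, ⟪t i, d⟫ < 1)})
    (hV : V = {v | ∃ α : ι → ℝ, (∀ i, 0 ≤ α i) ∧ (∀ i ∉ A, α i = 0) ∧ v = ∑ i, α i • t i})
    (hC : C = F + V)
    (x' : EuclideanSpace ℝ (Fin n)) (hx' : lam • x' ∈ C) :
    {i | ⟪t i, P (lam • x')⟫ = 1} = A ∧
    ∀ f v, f ∈ F → v ∈ V → lam • x' = f + v → P (lam • x') = f := by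
  have key : ∀ f v, f ∈ F → v ∈ V → lam • x' = f + v → P (lam • x') = f := by
    intro f v hf hv hfv
    rw [hF] at hf
    rw [hV] at hv
    obtain ⟨hf1, hf2⟩ := hf
    obtain ⟨α, hα0, hαA, rfl⟩ := hv
    have hfK : f ∈ {d : EuclideanSpace ℝ (Fin n) | ∀ i, ⟪t i, d⟫ ≤ 1} := by
      intro i
      by_cases hi : i ∈ A
      · exact (hf1 i hi).le
      · exact (hf2 i hi).le
    have hp := hPmem (lam • x')
    have hn := hPnear (lam • x') f hfK
    generalize P (lam • x') = p at hp hn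
    rw [hfv] at hn
    have hnn : 0 ≤ ⟪f - p, ∑ i, α i • t i⟫ := by
      rw [inner_sum]
      refine Finset.sum_nonneg fun i _ => ?_
      rw [real_inner_smul_right, real_inner_comm, inner_sub_right]
      by_cases hi : i ∈ A
      · have h1 := hf1 i hi
        have h2 := hp i
        exact mul_nonneg (hα0 i) (by linarith)
      · simp [hαA i hi]
    generalize (∑ i, α i • t i) = v at hn hnn
    have e1 : f + v - p = (f - p) + v := by abel
    have e2 : f + v - f = v := by abel
    rw [e1, e2] at hn
    have h3 := norm_add_sq_real (f - p) v
    have h4 : ‖f - p + v‖ ^ 2 ≤ ‖v‖ ^ 2 := by gcongr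
    have h5 : ‖f - p‖ ^ 2 = 0 := le_antisymm (by linarith) (sq_nonneg _)
    have h6 : f - p = 0 := norm_eq_zero.mp (pow_eq_zero_iff (by norm_num) |>.mp h5)
    exact (sub_eq_zero.mp h6).symm
  refine ⟨?_, key⟩
  rw [hC] at hx'
  obtain ⟨f, hf, v, hv, hfv⟩ := Set.mem_add.mp hx'
  rw [key f v hf hv hfv.symm]
  rw [hF] at hf
  ext i
  constructor
  · intro h
    by_contra hi
    exact (hf.2 i hi).ne h
  · exact fun hi => hf.1 i hi
end

section
/- Let E := EuclideanSpace ℝ (Fin n), let ι be a finite index type, t : ι → E, and K° := {d : E | ∀ i, ⟪t i, d⟫ ≤ 1}. Let f ∈ K°, let A := {i | ⟪t i, f⟫ = 1}, let α : ι → ℝ satisfy α i ≥ 0 for all i and α i = 0 for i ∉ A, and set v := ∑ i, α i • t i. Then for every z ∈ K°: ‖z − (f + v)‖² ≥ ‖z − f‖² + ‖v‖². In particular, ‖(f + v) − f‖ ≤ ‖(f + v) − z‖ for all z ∈ K°, i.e. f is a nearest point of K° to f + v. -/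
open scoped RealInnerProductSpace

theorem nearest_point_of_face_plus_cone
    {n : ℕ} {ι : Type*} [Fintype ι] (t : ι → EuclideanSpace ℝ (Fin n))
    (f : EuclideanSpace ℝ (Fin n)) (hf : ∀ i, ⟪t i, f⟫ ≤ 1)
    (α : ι → ℝ) (hα : ∀ i, 0 ≤ α i) (hα0 : ∀ i, i ∉ {i | ⟪t i, f⟫ = 1} → α i = 0)
    (v : EuclideanSpace ℝ (Fin n)) (hv : v = ∑ i, α i • t i) :
    (∀ z : EuclideanSpace ℝ (Fin n), (∀ i, ⟪t i, z⟫ ≤ 1) →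
      ‖z - f‖ ^ 2 + ‖v‖ ^ 2 ≤ ‖z - (f + v)‖ ^ 2) ∧
    (∀ z : EuclideanSpace ℝ (Fin n), (∀ i, ⟪t i, z⟫ ≤ 1) →
      ‖(f + v) - f‖ ≤ ‖(f + v) - z‖) := by
  have key : ∀ z : EuclideanSpace ℝ (Fin n), (∀ i, ⟪t i, z⟫ ≤ 1) →
      ‖z - f‖ ^ 2 + ‖v‖ ^ 2 ≤ ‖z - (f + v)‖ ^ 2 := by
    intro z hz
    have h1 : ⟪z - f, v⟫ ≤ 0 := by
      rw [real_inner_comm, hv, sum_inner]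
      apply Finset.sum_nonpos
      intro i _
      rw [real_inner_smul_left, inner_sub_right]
      by_cases h : ⟪t i, f⟫ = 1
      · rw [h]
        exact mul_nonpos_of_nonneg_of_nonpos (hα i) (by linarith [hz i])
      · rw [hα0 i h, zero_mul]
    have h2 : z - (f + v) = (z - f) - v := by abel
    rw [h2, norm_sub_sq_real (z - f) v]
    linarith
  refine ⟨key, fun z hz => ?_⟩
  have h := key z hz
  rw [add_sub_cancel_left, norm_sub_rev]
  refine (sq_le_sq₀ (norm_nonneg _) (norm_nonneg _)).mp ?_
  nlinarith [sq_nonneg ‖z - f‖]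
end

section
/- Let n, M ≥ 1, let E := EuclideanSpace ℝ (Fin n), let x ∈ E, λ > 0, and s : Fin M → E. Define the primal value set P := {r : ℝ | ∃ c : Fin M → ℝ, r = (∑ i, |c i|) + (λ/2) * ‖x − ∑ i, c i • s i‖²} and the dual value set D := {r : ℝ | ∃ d : E, (∀ i, |⟪s i, d⟫| ≤ 1) ∧ r = ⟪x, d⟫ − ‖d‖²/(2λ)}. Then sInf P = sSup D; moreover the infimum is attained by some c* : Fin M → ℝ and the supremum is attained by some d* ∈ E with ∀ i, |⟪s i, d*⟫| ≤ 1. -/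
open scoped RealInnerProductSpace

lemma aux_small (a K : ℝ) (hK : 0 ≤ K)
    (h : ∀ t : ℝ, 0 < t → t ≤ 1 → t * a ≤ K * t ^ 2) : a ≤ 0 := by
  by_contra! ha
  have hs : 0 < a + K := by linarith
  have ht : 0 < a / (a + K) := div_pos ha hs
  have h1 := h (a / (a + K)) ht ((div_le_one hs).2 (by linarith))
  have h2 : a ≤ K * (a / (a + K)) := by
    refine le_of_mul_le_mul_left ?_ ht
    linarith
  have h3 : (a / (a + K)) * (a + K) = a := by field_simp
  nlinarith [mul_pos ht ha]

lemma aux_expand {E : Type*} [NormedAddCommGroup E] [InnerProductSpace ℝ E]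
    (r v : E) (t : ℝ) : ‖r - t • v‖ ^ 2 = ‖r‖ ^ 2 - 2 * t * ⟪v, r⟫ + t ^ 2 * ‖v‖ ^ 2 := by
  rw [norm_sub_sq_real, norm_smul, inner_smul_right, real_inner_comm, mul_pow,
    Real.norm_eq_abs, sq_abs]
  ring

lemma aux_dir {E : Type*} [NormedAddCommGroup E] [InnerProductSpace ℝ E]
    {M : ℕ} (x : E) (lam : ℝ) (hlam : 0 < lam) (s : Fin M → E) (c : Fin M → ℝ)
    (hc : ∀ c' : Fin M → ℝ, (∑ i, |c i|) + (lam / 2) * ‖x - ∑ i, c i • s i‖ ^ 2 ≤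
      (∑ i, |c' i|) + (lam / 2) * ‖x - ∑ i, c' i • s i‖ ^ 2)
    (v : Fin M → ℝ) (B : ℝ)
    (hB : ∀ t : ℝ, 0 < t → t ≤ 1 → (∑ i, |c i + t * v i|) ≤ (∑ i, |c i|) + t * B) :
    ⟪∑ i, v i • s i, lam • (x - ∑ i, c i • s i)⟫ ≤ B := by
  rw [← sub_nonpos]
  refine aux_small _ (lam / 2 * ‖∑ i, v i • s i‖ ^ 2) (by positivity) ?_
  intro t ht0 ht1
  have h := hc (fun i => c i + t * v i)
  have e : x - ∑ i, (c i + t * v i) • s i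
      = (x - ∑ i, c i • s i) - t • ∑ i, v i • s i := by
    simp only [add_smul, Finset.sum_add_distrib, mul_smul, Finset.smul_sum]
    abel
  simp only [e, aux_expand] at h
  rw [inner_smul_right]
  have := hB t ht0 ht1
  nlinarith

lemma aux_exists {E : Type*} [NormedAddCommGroup E] [InnerProductSpace ℝ E]
    {M : ℕ} (x : E) (lam : ℝ) (hlam : 0 < lam) (s : Fin M → E) :
    ∃ c : Fin M → ℝ, ∀ c' : Fin M → ℝ,
      (∑ i, |c i|) + (lam / 2) * ‖x - ∑ i, c i • s i‖ ^ 2 ≤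
      (∑ i, |c' i|) + (lam / 2) * ‖x - ∑ i, c' i • s i‖ ^ 2 := by
  refine Continuous.exists_forall_le (β := Fin M → ℝ)
    (f := fun c => (∑ i, |c i|) + (lam / 2) * ‖x - ∑ i, c i • s i‖ ^ 2) (by fun_prop) ?_
  refine Filter.tendsto_atTop_mono ?_ (tendsto_norm_cocompact_atTop (E := Fin M → ℝ))
  intro c
  have h1 : ‖c‖ ≤ ∑ i, |c i| := by
    refine (pi_norm_le_iff_of_nonneg (Finset.sum_nonneg fun i _ => abs_nonneg _)).2 ?_
    intro i
    exact Finset.single_le_sum (f := fun i => |c i|) (fun i _ => abs_nonneg _)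
      (Finset.mem_univ i)
  have : 0 ≤ (lam / 2) * ‖x - ∑ i, c i • s i‖ ^ 2 := by positivity
  linarith

lemma aux_weak {E : Type*} [NormedAddCommGroup E] [InnerProductSpace ℝ E]
    {M : ℕ} (x : E) (lam : ℝ) (hlam : 0 < lam) (s : Fin M → E) (c : Fin M → ℝ) (d : E)
    (hd : ∀ i, |⟪s i, d⟫| ≤ 1) :
    ⟪x, d⟫ - ‖d‖ ^ 2 / (2 * lam) ≤
      (∑ i, |c i|) + (lam / 2) * ‖x - ∑ i, c i • s i‖ ^ 2 := by
  have h1 : ⟪∑ i, c i • s i, d⟫ ≤ ∑ i, |c i| := by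
    rw [sum_inner]
    refine Finset.sum_le_sum fun i _ => ?_
    rw [real_inner_smul_left]
    calc c i * ⟪s i, d⟫ ≤ |c i * ⟪s i, d⟫| := le_abs_self _
      _ = |c i| * |⟪s i, d⟫| := abs_mul _ _
      _ ≤ |c i| := mul_le_of_le_one_right (abs_nonneg _) (hd i)
  have h2 : ⟪x, d⟫ = ⟪x - ∑ i, c i • s i, d⟫ + ⟪∑ i, c i • s i, d⟫ := by
    rw [← inner_add_left, sub_add_cancel]
  have h3 := real_inner_le_norm (x - ∑ i, c i • s i) d
  generalize ‖x - ∑ i, c i • s i‖ = a at *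
  have h4 : a * ‖d‖ ≤ lam / 2 * a ^ 2 + ‖d‖ ^ 2 / (2 * lam) := by
    have : lam / 2 * a ^ 2 + ‖d‖ ^ 2 / (2 * lam) - a * ‖d‖
        = (lam * a - ‖d‖) ^ 2 / (2 * lam) := by
      field_simp
      ring
    have : 0 ≤ (lam * a - ‖d‖) ^ 2 / (2 * lam) := by positivity
    linarith
  linarith

theorem strong_duality_l1_reconstruction
    (n M : ℕ) (hn : 1 ≤ n) (hM : 1 ≤ M)
    (x : EuclideanSpace ℝ (Fin n)) (lam : ℝ) (hlam : 0 < lam)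
    (s : Fin M → EuclideanSpace ℝ (Fin n)) :
    sInf {r : ℝ | ∃ c : Fin M → ℝ,
        r = (∑ i, |c i|) + (lam / 2) * ‖x - ∑ i, c i • s i‖ ^ 2} =
      sSup {r : ℝ | ∃ d : EuclideanSpace ℝ (Fin n),
        (∀ i, |⟪s i, d⟫| ≤ 1) ∧ r = ⟪x, d⟫ - ‖d‖ ^ 2 / (2 * lam)} ∧
    (∃ cstar : Fin M → ℝ,
      (∑ i, |cstar i|) + (lam / 2) * ‖x - ∑ i, cstar i • s i‖ ^ 2 =
        sInf {r : ℝ | ∃ c : Fin M → ℝ,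
          r = (∑ i, |c i|) + (lam / 2) * ‖x - ∑ i, c i • s i‖ ^ 2}) ∧
    (∃ dstar : EuclideanSpace ℝ (Fin n), (∀ i, |⟪s i, dstar⟫| ≤ 1) ∧
      ⟪x, dstar⟫ - ‖dstar‖ ^ 2 / (2 * lam) =
        sSup {r : ℝ | ∃ d : EuclideanSpace ℝ (Fin n),
          (∀ i, |⟪s i, d⟫| ≤ 1) ∧ r = ⟪x, d⟫ - ‖d‖ ^ 2 / (2 * lam)}) := by
  obtain ⟨c, hc⟩ := aux_exists x lam hlam s
  have hdir := aux_dir x lam hlam s c hc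
  obtain ⟨d, hd⟩ : ∃ d, d = lam • (x - ∑ i, c i • s i) := ⟨_, rfl⟩
  rw [← hd] at hdir
  have hsingle : ∀ (j : Fin M) (e : ℝ), |e| = 1 → e * ⟪s j, d⟫ ≤ 1 := by
    intro j e he
    have h := hdir (Pi.single j e) 1 ?_
    · simpa [Pi.single_apply, ite_smul, real_inner_smul_left] using h
    · intro t ht0 _
      have : ∑ i, |t * (Pi.single j e : Fin M → ℝ) i| = t * 1 := by
        simp [Pi.single_apply, abs_mul, apply_ite abs, he, abs_of_pos ht0]
      rw [← this, ← Finset.sum_add_distrib]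
      exact Finset.sum_le_sum fun i _ => abs_add_le _ _
  have hfeas : ∀ i, |⟪s i, d⟫| ≤ 1 := by
    intro i
    have h1 := hsingle i 1 (by simp)
    have h2 := hsingle i (-1) (by simp)
    exact abs_le.2 ⟨by linarith, by linarith⟩
  have hA : ∑ i, |c i| ≤ ⟪∑ i, c i • s i, d⟫ := by
    have h := hdir (fun i => - c i) (-∑ i, |c i|) ?_
    · simp only [neg_smul, Finset.sum_neg_distrib, inner_neg_left] at h
      linarith
    · intro t ht0 ht1
      apply le_of_eq
      have : ∀ i, |c i + t * -c i| = (1 - t) * |c i| := by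
        intro i
        rw [show c i + t * -c i = (1 - t) * c i by ring, abs_mul,
          abs_of_nonneg (by linarith : 0 ≤ 1 - t)]
      simp only [this, ← Finset.mul_sum]
      ring
  have hge : (∑ i, |c i|) + (lam / 2) * ‖x - ∑ i, c i • s i‖ ^ 2 ≤
      ⟪x, d⟫ - ‖d‖ ^ 2 / (2 * lam) := by
    have h2 : ⟪x, d⟫ = ⟪x - ∑ i, c i • s i, d⟫ + ⟪∑ i, c i • s i, d⟫ := by
      rw [← inner_add_left, sub_add_cancel]
    have h3 : ⟪x - ∑ i, c i • s i, d⟫ = lam * ‖x - ∑ i, c i • s i‖ ^ 2 := by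
      rw [hd, inner_smul_right, real_inner_self_eq_norm_sq]
    have h4 : ‖d‖ ^ 2 / (2 * lam) = lam / 2 * ‖x - ∑ i, c i • s i‖ ^ 2 := by
      rw [hd, norm_smul, Real.norm_eq_abs, abs_of_pos hlam]
      field_simp
    linarith
  have heq := le_antisymm hge (aux_weak x lam hlam s c d hfeas)
  have hP : IsLeast {r : ℝ | ∃ c : Fin M → ℝ,
        r = (∑ i, |c i|) + (lam / 2) * ‖x - ∑ i, c i • s i‖ ^ 2}
      ((∑ i, |c i|) + (lam / 2) * ‖x - ∑ i, c i • s i‖ ^ 2) := by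
    refine ⟨⟨c, rfl⟩, ?_⟩
    rintro r ⟨c', rfl⟩
    exact hc c'
  have hD : IsGreatest {r : ℝ | ∃ d : EuclideanSpace ℝ (Fin n),
        (∀ i, |⟪s i, d⟫| ≤ 1) ∧ r = ⟪x, d⟫ - ‖d‖ ^ 2 / (2 * lam)}
      (⟪x, d⟫ - ‖d‖ ^ 2 / (2 * lam)) := by
    refine ⟨⟨d, hfeas, rfl⟩, ?_⟩
    rintro r ⟨d', hd', rfl⟩
    rw [← heq]
    exact aux_weak x lam hlam s c d' hd'
  rw [hP.csInf_eq, hD.csSup_eq]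
  exact ⟨heq, ⟨c, rfl⟩, ⟨d, hfeas, rfl⟩⟩
end

section
/- With the dual-projection setup: let Z be any type and Agg : Set ι → Z any function, and define the dual classifier g : E → Z by g(y) := Agg(Active(λ • y)). Then g is certified on the polyhedron C(x): for every x' ∈ E with λ • x' ∈ C(x), g(x') = g(x). -/
open scoped RealInnerProductSpace Pointwise

theorem dual_classifier_certified
    {n : ℕ} {ι : Type*} [Fintype ι] (t : ι → EuclideanSpace ℝ (Fin n))
    -- `P` is the metric projection onto the polar polyhedron `K° = {d | ∀ i, ⟪t i, d⟫ ≤ 1}`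
    (P : EuclideanSpace ℝ (Fin n) → EuclideanSpace ℝ (Fin n))
    (hPmem : ∀ y, P y ∈ {d : EuclideanSpace ℝ (Fin n) | ∀ i, ⟪t i, d⟫ ≤ 1})
    (hPnear : ∀ y, ∀ z ∈ {d : EuclideanSpace ℝ (Fin n) | ∀ i, ⟪t i, d⟫ ≤ 1},
      ‖y - P y‖ ≤ ‖y - z‖)
    (x : EuclideanSpace ℝ (Fin n)) (lam : ℝ) (hlam : 0 < lam)
    -- the active set `A := Active (lam • x)`
    (A : Set ι) (hA : A = {i | ⟪t i, P (lam • x)⟫ = 1})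
    -- the face `F`, the cone `V`, and the certified polyhedron `C = F + V`
    (F V C : Set (EuclideanSpace ℝ (Fin n)))
    (hF : F = {d | (∀ i ∈ A, ⟪t i, d⟫ = 1) ∧ (∀ i ∉ A, ⟪t i, d⟫ < 1)})
    (hV : V = {v | ∃ α : ι → ℝ, (∀ i, 0 ≤ α i) ∧ (∀ i ∉ A, α i = 0) ∧ v = ∑ i, α i • t i})
    (hC : C = F + V)
    -- the dual classifier obtained by aggregating labels over the active set
    {Z : Type*} (Agg : Set ι → Z)
    (g : EuclideanSpace ℝ (Fin n) → Z)
    (hg : ∀ y, g y = Agg {i | ⟪t i, P (lam • y)⟫ = 1})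
    (x' : EuclideanSpace ℝ (Fin n)) (hx' : lam • x' ∈ C) :
    g x' = g x := by
  subst hC hF hV
  obtain ⟨d, ⟨hd1, hd2⟩, v, ⟨α, hα, hα0, hv⟩, hdv⟩ := Set.mem_add.mp hx'
  have hdK : ∀ i, ⟪t i, d⟫ ≤ 1 := fun i => by
    by_cases h : i ∈ A
    · exact (hd1 i h).le
    · exact (hd2 i h).le
  have hpK := hPmem (lam • x')
  have hnear := hPnear (lam • x') d hdK
  have key : P (lam • x') = d := by
    generalize P (lam • x') = p at hpK hnear
    rw [← hdv] at hnear
    have e1 : d + v - p = v + (d - p) := by abel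
    have e2 : d + v - d = v := by abel
    rw [e1, e2] at hnear
    have hin : 0 ≤ ⟪v, d - p⟫ := by
      rw [hv, sum_inner]
      refine Finset.sum_nonneg fun i _ => ?_
      rw [real_inner_smul_left, inner_sub_right]
      by_cases h : i ∈ A
      · rw [hd1 i h]
        exact mul_nonneg (hα i) (sub_nonneg.mpr (hpK i))
      · rw [hα0 i h, zero_mul]
    have hexp := norm_add_sq_real v (d - p)
    have hsq : ‖v + (d - p)‖ ^ 2 ≤ ‖v‖ ^ 2 := pow_le_pow_left₀ (norm_nonneg _) hnear 2
    have h0 : ‖d - p‖ ^ 2 = 0 := le_antisymm (by linarith) (sq_nonneg _)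
    have h1 : d - p = 0 := norm_eq_zero.mp (pow_eq_zero_iff (two_ne_zero) |>.mp h0)
    exact (sub_eq_zero.mp h1).symm
  rw [hg, hg, ← hA, key]
  congr 1
  ext i
  constructor
  · intro h
    by_contra hn
    exact (hd2 i hn).ne h
  · exact fun h => hd1 i h
end

section
/- Let n ≥ 2, let E := EuclideanSpace ℝ (Fin n), let α > 0, γ := Real.exp (−α), and ε ≥ 0. Let S₁ := {x : E | (∀ i, |x i| ≤ 1) ∧ |x 0| ≤ γ/2} and S₂ := {x : E | (∀ i, |x i| ≤ 1) ∧ |x 1| ≤ γ/2}, and let q₁, q₂ be the uniform probability measures on S₁ and S₂ respectively. Define f : E → Fin 2 by f x = 2 if |x 1| ≤ γ/2 + ε and |x 0| > γ/2 + ε, and f x = 1 otherwise. Then the robust risk against ℓ2-perturbations of size ε within the ℓ∞ unit ball satisfies (1/2) * q₁ {x | ∃ x', ‖x' − x‖ ≤ ε ∧ (∀ i, |x' i| ≤ 1) ∧ f x' ≠ 1} + (1/2) * q₂ {x | ∃ x', ‖x' − x‖ ≤ ε ∧ (∀ i, |x' i| ≤ 1) ∧ f x' ≠ 2} ≤ (Real.exp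 (−α) + 4 * ε) / 2, where ‖·‖ is the Euclidean norm. -/
open MeasureTheory

lemma box_volume_aux (n : ℕ) (b : Fin n → ℝ) :
    volume {x : EuclideanSpace ℝ (Fin n) | ∀ i, |x i| ≤ b i} =
      ∏ i, ENNReal.ofReal (2 * b i) := by
  have h : {x : EuclideanSpace ℝ (Fin n) | ∀ i, |x i| ≤ b i} =
      (MeasurableEquiv.toLp 2 (Fin n → ℝ)).symm ⁻¹'
        (Set.pi Set.univ (fun i => Set.Icc (-b i) (b i))) := by
    ext x
    simp [abs_le, Pi.le_def, forall_and]
  rw [h, (EuclideanSpace.volume_preserving_symm_measurableEquiv_toLp (Fin n)).measure_preimage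
    (MeasurableSet.univ_pi fun i => measurableSet_Icc).nullMeasurableSet, volume_pi_pi]
  refine Finset.prod_congr rfl fun i _ => ?_
  rw [Real.volume_Icc]
  congr 1
  ring

lemma coord_aux {n : ℕ} (x y : EuclideanSpace ℝ (Fin n)) (i : Fin n) {ε : ℝ}
    (h : ‖x - y‖ ≤ ε) : |x i - y i| ≤ ε := by
  have := PiLp.norm_apply_le (x - y) i
  simp only [PiLp.sub_apply, Real.norm_eq_abs] at this
  linarith

theorem subspace_example_robust_risk
    (n : ℕ) (hn : 2 ≤ n)
    (α : ℝ) (hα : 0 < α) (γ : ℝ) (hγ : γ = Real.exp (-α)) (ε : ℝ) (hε : 0 ≤ ε)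
    (S₁ S₂ : Set (EuclideanSpace ℝ (Fin n)))
    (hS₁ : S₁ = {x | (∀ i, |x i| ≤ 1) ∧ |x ⟨0, by omega⟩| ≤ γ / 2})
    (hS₂ : S₂ = {x | (∀ i, |x i| ≤ 1) ∧ |x ⟨1, by omega⟩| ≤ γ / 2})
    -- `q₁`, `q₂` are the uniform probability measures on `S₁`, `S₂`
    (q₁ q₂ : Set (EuclideanSpace ℝ (Fin n)) → ENNReal)
    (hq₁ : ∀ B, q₁ B = volume (B ∩ S₁) / volume S₁)
    (hq₂ : ∀ B, q₂ B = volume (B ∩ S₂) / volume S₂)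
    -- the classifier: `f x = 2` iff `|x 1| ≤ γ/2 + ε` and `|x 0| > γ/2 + ε`, else `f x = 1`
    (f : EuclideanSpace ℝ (Fin n) → Fin 2)
    (hf2 : ∀ x, (|x ⟨1, by omega⟩| ≤ γ / 2 + ε ∧ γ / 2 + ε < |x ⟨0, by omega⟩|) → f x = 2)
    (hf1 : ∀ x, ¬(|x ⟨1, by omega⟩| ≤ γ / 2 + ε ∧ γ / 2 + ε < |x ⟨0, by omega⟩|) → f x = 1) :
    (1 / 2) * q₁ {x | ∃ x', ‖x' - x‖ ≤ ε ∧ (∀ i, |x' i| ≤ 1) ∧ f x' ≠ 1} +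
      (1 / 2) * q₂ {x | ∃ x', ‖x' - x‖ ≤ ε ∧ (∀ i, |x' i| ≤ 1) ∧ f x' ≠ 2} ≤
    ENNReal.ofReal ((Real.exp (-α) + 4 * ε) / 2) := by
  have hγ0 : 0 < γ := by rw [hγ]; exact Real.exp_pos _
  have hγ1 : γ < 1 := by rw [hγ]; simpa using hα
  set i0 : Fin n := ⟨0, by omega⟩ with hi0
  set i1 : Fin n := ⟨1, by omega⟩ with hi1
  have hne : i0 ≠ i1 := by simp [hi0, hi1]
  set c : ℝ := γ / 2 + 2 * ε with hc
  have hc0 : 0 ≤ c := by positivity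
  have e1 : q₁ {x | ∃ x', ‖x' - x‖ ≤ ε ∧ (∀ i, |x' i| ≤ 1) ∧ f x' ≠ 1} = 0 := by
    rw [hq₁]
    have : {x | ∃ x', ‖x' - x‖ ≤ ε ∧ (∀ i, |x' i| ≤ 1) ∧ f x' ≠ 1} ∩ S₁ = ∅ := by
      rw [Set.eq_empty_iff_forall_notMem]
      rintro x ⟨⟨x', hx, -, hfx⟩, hxS⟩
      rw [hS₁] at hxS
      refine hfx (hf1 x' ?_)
      rintro ⟨-, h⟩
      have h1 := coord_aux x' x i0 hx
      have h2 : |x i0| ≤ γ / 2 := hxS.2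
      have h3 := abs_sub_abs_le_abs_sub (x' i0) (x i0)
      linarith
    rw [this]
    simp
  let b : Fin n → ℝ := fun i => if i = i1 then γ / 2 else 1
  have hb : ∀ i, 0 < b i := by
    intro i
    simp only [b]
    split_ifs <;> linarith
  have hS : S₂ = {x | ∀ i, |x i| ≤ b i} := by
    rw [hS₂]
    ext x
    simp only [Set.mem_setOf_eq, b]
    constructor
    · rintro ⟨h, h'⟩ i
      split_ifs with hi
      · rw [hi]; exact h'
      · exact h i
    · intro h
      refine ⟨fun i => (h i).trans ?_, by simpa using h i1⟩
      split_ifs <;> linarith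
  have hv : volume S₂ = ∏ i, ENNReal.ofReal (2 * b i) := by rw [hS, box_volume_aux]
  have hv0 : volume S₂ ≠ 0 := by
    rw [hv, Finset.prod_ne_zero_iff]
    intro i _
    have := hb i
    simpa using this
  have hvt : volume S₂ ≠ ⊤ := by
    rw [hv]
    exact ENNReal.prod_ne_top fun i _ => ENNReal.ofReal_ne_top
  have e2 : q₂ {x | ∃ x', ‖x' - x‖ ≤ ε ∧ (∀ i, |x' i| ≤ 1) ∧ f x' ≠ 2} ≤ ENNReal.ofReal c := by
    rw [hq₂]
    refine ENNReal.div_le_of_le_mul ?_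
    have hsub : {x | ∃ x', ‖x' - x‖ ≤ ε ∧ (∀ i, |x' i| ≤ 1) ∧ f x' ≠ 2} ∩ S₂ ⊆
        {x | ∀ i, |x i| ≤ b i * (if i = i0 then c else 1)} := by
      rintro x ⟨⟨x', hx, -, hfx⟩, hxS⟩ i
      rw [hS] at hxS
      split_ifs with hi
      · have hb0 : b i0 = 1 := by simp [b, hne]
        rw [hi, hb0, one_mul]
        by_contra hcon
        refine hfx (hf2 x' ⟨?_, ?_⟩)
        · have h1 := coord_aux x' x i1 hx
          have h2 : |x i1| ≤ γ / 2 := by simpa [b] using hxS i1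
          have h3 := abs_sub_abs_le_abs_sub (x' i1) (x i1)
          linarith
        · have h1 := coord_aux x' x i0 hx
          have h3 := abs_sub_abs_le_abs_sub (x i0) (x' i0)
          rw [abs_sub_comm] at h3
          linarith
      · simpa using hxS i
    refine (measure_mono hsub).trans ?_
    rw [box_volume_aux, hv]
    have : ∀ i, ENNReal.ofReal (2 * (b i * (if i = i0 then c else 1))) =
        ENNReal.ofReal (2 * b i) * (if i = i0 then ENNReal.ofReal c else 1) := by
      intro i
      have := hb i
      split_ifs
      · rw [← mul_assoc, ENNReal.ofReal_mul (by positivity)]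
      · simp
    simp only [this, Finset.prod_mul_distrib, Finset.prod_ite_eq', Finset.mem_univ, if_true]
    rw [mul_comm]
  rw [e1, mul_zero, zero_add, ← hγ]
  calc _ ≤ 1 * ENNReal.ofReal c := by
        gcongr
        simp
    _ ≤ _ := by
        rw [one_mul]
        apply ENNReal.ofReal_le_ofReal
        rw [hc]
        linarith
end

section
/- Let n ≥ 2, let E := EuclideanSpace ℝ (Fin n), let α > 0, γ := Real.exp (−α), and let ε ≥ 0 satisfy γ/2 + 2ε ≤ 1. Let S₁ := {x : E | (∀ i, |x i| ≤ 1) ∧ |x 0| ≤ γ/2} and S₂ := {x : E | (∀ i, |x i| ≤ 1) ∧ |x 1| ≤ γ/2}, and let q₁ be the uniform probability measure on S₁. Then q₁ ((S₂)^{+2ε}) = γ/2 + 2ε, where the expansion is with respect to the Euclidean metric. -/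
open MeasureTheory

lemma volume_box_aux {n : ℕ} (r : Fin n → ℝ) :
    volume {x : EuclideanSpace ℝ (Fin n) | ∀ i, |x i| ≤ r i} = ∏ i, ENNReal.ofReal (2 * r i) := by
  have h : {x : EuclideanSpace ℝ (Fin n) | ∀ i, |x i| ≤ r i} =
      (MeasurableEquiv.toLp 2 (Fin n → ℝ)).symm ⁻¹'
        (Set.univ.pi fun i => Set.Icc (-r i) (r i)) := by
    ext x
    simp only [Set.mem_ofPred_eq, abs_le, Set.mem_preimage, Set.mem_pi, Set.mem_univ, true_implies,
      Set.mem_Icc]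
    rfl
  rw [h, (EuclideanSpace.volume_preserving_symm_measurableEquiv_toLp (Fin n)).measure_preimage_equiv,
    volume_pi_pi]
  refine Finset.prod_congr rfl fun i _ => ?_
  rw [Real.volume_Icc]
  congr 1
  ring

lemma expand_inter_aux {n : ℕ} (j k : Fin n) (hjk : j ≠ k) (g e : ℝ) (hg : 0 ≤ g) (he : 0 ≤ e)
    (hge : g + e ≤ 1) :
    expandSet {x : EuclideanSpace ℝ (Fin n) | (∀ i, |x i| ≤ 1) ∧ |x k| ≤ g} e ∩
      {x | (∀ i, |x i| ≤ 1) ∧ |x j| ≤ g} =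
    {x | ∀ i, |x i| ≤ Function.update (Function.update (fun _ => (1 : ℝ)) j g) k (g + e) i} := by
  ext x
  simp only [expandSet, Set.mem_inter_iff, Set.mem_ofPred_eq]
  constructor
  · rintro ⟨⟨y, ⟨_, hyk⟩, hd⟩, hx, hxj⟩ i
    by_cases hik : i = k
    · subst hik
      rw [Function.update_self]
      have h1 : |x i - y i| ≤ e := by
        have := PiLp.norm_apply_le (x - y) i
        rw [dist_eq_norm] at hd
        simpa using this.trans hd
      have h2 := abs_add_le (x i - y i) (y i)
      rw [sub_add_cancel] at h2
      linarith
    · rw [Function.update_of_ne hik]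
      by_cases hij : i = j
      · subst hij; rwa [Function.update_self]
      · rw [Function.update_of_ne hij]; exact hx i
  · intro h
    have hk : |x k| ≤ g + e := by simpa using h k
    have hj : |x j| ≤ g := by simpa [hjk] using h j
    have hx : ∀ i, |x i| ≤ 1 := by
      intro i
      by_cases hik : i = k
      · subst hik; linarith
      · by_cases hij : i = j
        · subst hij; linarith
        · simpa [hik, hij] using h i
    refine ⟨?_, hx, hj⟩
    obtain ⟨d, hd, hxd⟩ : ∃ d : ℝ, |d| ≤ e ∧ |x k - d| ≤ g := by
      rw [abs_le] at hk
      rcases le_total (x k) (-g) with h1 | h1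
      · exact ⟨x k + g, by rw [abs_le]; constructor <;> linarith,
          by rw [abs_le]; constructor <;> linarith⟩
      · rcases le_total (x k) g with h2 | h2
        · exact ⟨0, by simpa using he, by rw [abs_le]; constructor <;> linarith⟩
        · exact ⟨x k - g, by rw [abs_le]; constructor <;> linarith,
            by rw [abs_le]; constructor <;> linarith⟩
    refine ⟨x - EuclideanSpace.single k d, ⟨fun i => ?_, by simpa using hxd⟩, ?_⟩
    · by_cases hik : i = k
      · subst hik
        have : |x i - d| ≤ 1 := by linarith
        simpa using this
      · simpa [hik] using hx i
    · rw [dist_eq_norm, sub_sub_cancel]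
      simpa using hd

theorem uniform_measure_of_expanded_slab
    (n : ℕ) (hn : 2 ≤ n)
    (α : ℝ) (hα : 0 < α) (γ : ℝ) (hγ : γ = Real.exp (-α))
    (ε : ℝ) (hε : 0 ≤ ε) (hε1 : γ / 2 + 2 * ε ≤ 1)
    (S₁ S₂ : Set (EuclideanSpace ℝ (Fin n)))
    (hS₁ : S₁ = {x | (∀ i, |x i| ≤ 1) ∧ |x ⟨0, by omega⟩| ≤ γ / 2})
    (hS₂ : S₂ = {x | (∀ i, |x i| ≤ 1) ∧ |x ⟨1, by omega⟩| ≤ γ / 2})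
    -- `q₁` is the uniform probability measure on `S₁`
    (q₁ : Set (EuclideanSpace ℝ (Fin n)) → ENNReal)
    (hq₁ : ∀ B, q₁ B = volume (B ∩ S₁) / volume S₁) :
    q₁ (expandSet S₂ (2 * ε)) = ENNReal.ofReal (γ / 2 + 2 * ε) := by
  have hγ0 : 0 < γ := hγ ▸ Real.exp_pos _
  have hjk : (⟨0, by omega⟩ : Fin n) ≠ ⟨1, by omega⟩ := by simp
  have key := expand_inter_aux _ _ hjk (γ / 2) (2 * ε) (by positivity) (by positivity) hε1
  have key0 : S₁ = {x | ∀ i, |x i| ≤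
      Function.update (fun _ => (1 : ℝ)) (⟨0, by omega⟩ : Fin n) (γ / 2) i} := by
    rw [hS₁]
    ext x
    simp only [Set.mem_ofPred_eq]
    constructor
    · rintro ⟨h, h0⟩ i
      by_cases hi : i = ⟨0, by omega⟩
      · subst hi; rwa [Function.update_self]
      · rw [Function.update_of_ne hi]; exact h i
    · intro h
      have h0 : |x ⟨0, by omega⟩| ≤ γ / 2 := by simpa using h ⟨0, by omega⟩
      refine ⟨fun i => ?_, h0⟩
      by_cases hi : i = ⟨0, by omega⟩
      · subst hi; linarith
      · simpa [hi] using h i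
  rw [← hS₁, ← hS₂] at key
  rw [hq₁, key, key0, volume_box_aux, volume_box_aux]
  generalize (⟨0, by omega⟩ : Fin n) = j at *
  generalize (⟨1, by omega⟩ : Fin n) = k at *
  rw [← Finset.mul_prod_erase _ _ (Finset.mem_univ k),
    ← Finset.mul_prod_erase (a := k) (f := fun i => ENNReal.ofReal
      (2 * Function.update (fun _ => (1 : ℝ)) j (γ / 2) i)) _ (Finset.mem_univ k)]
  have hc : ∏ i ∈ Finset.univ.erase k, ENNReal.ofReal
      (2 * Function.update (Function.update (fun _ => (1 : ℝ)) j (γ / 2)) k (γ / 2 + 2 * ε) i) =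
      ∏ i ∈ Finset.univ.erase k, ENNReal.ofReal
      (2 * Function.update (fun _ => (1 : ℝ)) j (γ / 2) i) := by
    refine Finset.prod_congr rfl fun i hi => ?_
    rw [Function.update_of_ne (Finset.ne_of_mem_erase hi)]
  rw [hc, ENNReal.mul_div_mul_right, Function.update_self, Function.update_of_ne hjk.symm,
    ← ENNReal.ofReal_div_of_pos (by norm_num)]
  · congr 1; ring
  · refine Finset.prod_ne_zero_iff.mpr fun i _ => ?_
    rw [ne_eq, ENNReal.ofReal_eq_zero, not_le]
    by_cases hi : i = j
    · subst hi; rw [Function.update_self]; linarith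
    · rw [Function.update_of_ne hi]; norm_num
  · exact ENNReal.prod_ne_top fun i _ => ENNReal.ofReal_ne_top
end

section
/- Let n, M ≥ 1, let E := EuclideanSpace ℝ (Fin n), let x ∈ E, λ > 0, and s : Fin M → E. Suppose c* : Fin M → ℝ minimizes c ↦ (∑ i, |c i|) + (λ/2) * ‖x − ∑ i, c i • s i‖² over all c : Fin M → ℝ, and set d* := λ • (x − ∑ i, c* i • s i). Then: (i) |⟪s i, d*⟫| ≤ 1 for every i; (ii) for every i with c* i > 0, ⟪s i, d*⟫ = 1, and for every i with c* i < 0, ⟪s i, d*⟫ = −1; and (iii) d* maximizes d ↦ ⟪x, d⟫ − ‖d‖²/(2λ) over the set {d : E | ∀ i, |⟪s i, d⟫| ≤ 1}. -/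
open scoped RealInnerProductSpace

theorem aux_slope (p K δ : ℝ) (hK : 0 ≤ K) (hδ : 0 < δ)
    (h : ∀ t, 0 < t → t ≤ δ → 0 ≤ t * p + K * t ^ 2) : 0 ≤ p := by
  by_contra hp
  push Not at hp
  have hq : 0 < -p / (2 * (K + 1)) := div_pos (by linarith) (by linarith)
  have ht : 0 < min δ (-p / (2 * (K + 1))) := lt_min hδ hq
  have h1 := h _ ht (min_le_left _ _)
  have h2 := min_le_right δ (-p / (2 * (K + 1)))
  rw [le_div_iff₀ (by linarith)] at h2
  generalize min δ (-p / (2 * (K + 1))) = t at *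
  have h3 : 0 ≤ t * (p + K * t) := by nlinarith
  have h4 : 0 ≤ p + K * t := nonneg_of_mul_nonneg_right h3 ht
  nlinarith

theorem aux_scalar (a g K : ℝ) (hK : 0 ≤ K)
    (h : ∀ t, 0 ≤ |a + t| - |a| - t * g + K * t ^ 2) :
    |g| ≤ 1 ∧ (0 < a → g = 1) ∧ (a < 0 → g = -1) := by
  have hg1 : 0 ≤ 1 - g := by
    refine aux_slope _ K 1 hK one_pos fun t ht _ => ?_
    have h1 := h t
    have h2 := abs_add_le a t
    rw [abs_of_pos ht] at h2
    linarith
  have hg2 : 0 ≤ 1 + g := by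
    refine aux_slope _ K 1 hK one_pos fun t ht _ => ?_
    have h1 := h (-t)
    have h2 := abs_add_le a (-t)
    rw [abs_neg, abs_of_pos ht] at h2
    rw [neg_sq] at h1
    linarith
  refine ⟨abs_le.2 ⟨by linarith, by linarith⟩, fun ha => ?_, fun ha => ?_⟩
  · have : 0 ≤ g - 1 := by
      refine aux_slope _ K a hK ha fun t ht hta => ?_
      have h1 := h (-t)
      rw [abs_of_pos ha, abs_of_nonneg (by linarith), neg_sq] at h1
      linarith
    linarith
  · have : 0 ≤ -g - 1 := by
      refine aux_slope _ K (-a) hK (by linarith) fun t ht hta => ?_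
      have h1 := h t
      rw [abs_of_neg ha, abs_of_nonpos (by linarith)] at h1
      linarith
    linarith

theorem primal_optimality_conditions
    (n M : ℕ) (hn : 1 ≤ n) (hM : 1 ≤ M)
    (x : EuclideanSpace ℝ (Fin n)) (lam : ℝ) (hlam : 0 < lam)
    (s : Fin M → EuclideanSpace ℝ (Fin n))
    (cstar : Fin M → ℝ)
    (hmin : ∀ c : Fin M → ℝ,
      (∑ i, |cstar i|) + (lam / 2) * ‖x - ∑ i, cstar i • s i‖ ^ 2 ≤
        (∑ i, |c i|) + (lam / 2) * ‖x - ∑ i, c i • s i‖ ^ 2)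
    (dstar : EuclideanSpace ℝ (Fin n))
    (hd : dstar = lam • (x - ∑ i, cstar i • s i)) :
    (∀ i, |⟪s i, dstar⟫| ≤ 1) ∧
    (∀ i, 0 < cstar i → ⟪s i, dstar⟫ = 1) ∧
    (∀ i, cstar i < 0 → ⟪s i, dstar⟫ = -1) ∧
    (∀ d : EuclideanSpace ℝ (Fin n), (∀ i, |⟪s i, d⟫| ≤ 1) →
      ⟪x, d⟫ - ‖d‖ ^ 2 / (2 * lam) ≤ ⟪x, dstar⟫ - ‖dstar‖ ^ 2 / (2 * lam)) := by
  have key : ∀ i, |⟪s i, dstar⟫| ≤ 1 ∧ (0 < cstar i → ⟪s i, dstar⟫ = 1) ∧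
      (cstar i < 0 → ⟪s i, dstar⟫ = -1) := by
    intro i
    refine aux_scalar (cstar i) _ (lam / 2 * ‖s i‖ ^ 2) (by positivity) fun t => ?_
    have h := hmin (fun j => cstar j + if j = i then t else 0)
    have e1 : ∑ j, (cstar j + if j = i then t else 0) • s j
        = ∑ j, cstar j • s j + t • s i := by
      simp [add_smul, Finset.sum_add_distrib, ite_smul]
    have e2 : ∑ j, |cstar j + if j = i then t else 0|
        = ∑ j, |cstar j| + (|cstar i + t| - |cstar i|) := by
      rw [← sub_eq_iff_eq_add', ← Finset.sum_sub_distrib, Finset.sum_eq_single i]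
      · simp
      · intro j _ hj
        simp [hj]
      · simp
    rw [e1, e2, ← sub_sub, norm_sub_sq_real (x - ∑ j, cstar j • s j) (t • s i)] at h
    rw [hd]
    simp only [inner_smul_right, norm_smul, mul_pow, Real.norm_eq_abs, sq_abs] at h ⊢
    rw [real_inner_comm (s i)] at h
    linarith
  refine ⟨fun i => (key i).1, fun i => (key i).2.1, fun i => (key i).2.2, fun d hdd => ?_⟩
  have hx : x = ∑ i, cstar i • s i + lam⁻¹ • dstar := by
    rw [hd, smul_smul, inv_mul_cancel₀ hlam.ne', one_smul]
    abel
  have hin : ∀ d, ⟪x, d⟫ = ∑ i, cstar i * ⟪s i, d⟫ + lam⁻¹ * ⟪dstar, d⟫ := by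
    intro d
    conv_lhs => rw [hx]
    simp [inner_add_left, sum_inner, real_inner_smul_left]
  have hs : ∑ i, cstar i * ⟪s i, d⟫ ≤ ∑ i, cstar i * ⟪s i, dstar⟫ := by
    refine Finset.sum_le_sum fun i _ => ?_
    have hb := abs_le.1 (hdd i)
    rcases lt_trichotomy (cstar i) 0 with h | h | h
    · rw [(key i).2.2 h]
      nlinarith
    · simp [h]
    · rw [(key i).2.1 h]
      nlinarith
  have hn2 := norm_sub_sq_real dstar d
  have hq : 0 ≤ lam⁻¹ * ‖dstar - d‖ ^ 2 := by positivity
  rw [hn2] at hq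
  rw [hin d, hin dstar, real_inner_self_eq_norm_sq, div_eq_mul_inv, div_eq_mul_inv, mul_inv]
  linarith
end
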